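/- Let θ be an m×m matrix with nonnegative real entries. Then the Bethe permanent satisfies perm_B(θ) = limsup_{M→∞} perm_{B,M}(θ) ≤ perm(θ). -/

import Mathlib

open scoped BigOperators

/-- The `P`-lifting `θ^↑P` of an `m × m` matrix `θ`, where the block permutation matrices
`P_{jl}` are given by the permutations `σ j l`. -/
def Matrix.plift {R : Type*} [CommSemiring R] {m M : ℕ} (θ : Matrix (Fin m) (Fin m) R)
    (σ : Fin m → Fin m → Equiv.Perm (Fin M)) :
    Matrix (Fin m × Fin M) (Fin m × Fin M) R :=
  Matrix.of fun p q => θ p.1 q.1 * (if σ p.1 q.1 p.2 = q.2 then 1 else 0)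

/-- The arithmetic average of `perm (θ^↑P)` over all `P ∈ 𝒫_M^m`. -/
noncomputable def betheAvg {m : ℕ} (M : ℕ) (θ : Matrix (Fin m) (Fin m) ℝ) : ℝ :=
  (∑ σ : Fin m → Fin m → Equiv.Perm (Fin M), (θ.plift σ).permanent) /
    (Fintype.card (Fin m → Fin m → Equiv.Perm (Fin M)) : ℝ)

/-- The degree-`M` Bethe permanent `perm_{B,M}(θ) = ⟨perm(θ^↑P)⟩^{1/M}`. -/
noncomputable def betheDegM {m : ℕ} (M : ℕ) (θ : Matrix (Fin m) (Fin m) ℝ) : ℝ :=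
  (betheAvg M θ) ^ ((M : ℝ)⁻¹)

/-- The Bethe permanent `perm_B(θ) = limsup_{M → ∞} perm_{B,M}(θ)`. -/
noncomputable def bethe {m : ℕ} (θ : Matrix (Fin m) (Fin m) ℝ) : ℝ :=
  Filter.limsup (fun M : ℕ => betheDegM M θ) Filter.atTop

/-!
Expanding `perm (θ^↑P)` edge by edge, every copy of a row selects a column and every copy of a
column selects a row, and a selection counts when `P i j` carries the copies of row `i` selecting
column `j` onto the copies of column `j` selecting row `i`. Averaging over `P` replaces this
condition, independently on each edge `(i, j)`, by the probability that a uniformly random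
permutation carries the first set onto the second, whereas `perm θ ^ M` is the sum in which the
two sets are equal on every edge. It therefore suffices that the sum does not decrease when the
condition on one further edge `e` is changed from random to equality. That is an injection: if
copies `s` and `t` witness that the sets `R ≠ T` at `e` differ, exchange `s` and `t` at all vertices
not reached by the alternating walk that starts at the row of `e` and follows row selections on
copy `s` and column selections on copy `t`. This preserves the weight and the equalities already
imposed, and brings `T` closer to `R`.
-/

open Finset
open scoped Pointwise

section Exchange

variable {α : Type*} [DecidableEq α]

theorem swap_apply_iff_of_not {P : α → Prop} {s t : α} (hs : ¬ P s) (ht : ¬ P t) (p : α) :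
    P (Equiv.swap s t p) ↔ P p := by
  rw [Equiv.swap_apply_def]
  split_ifs with hps hpt
  · simp [hps, hs, ht]
  · simp [hpt, hs, ht]
  · rfl

theorem sdiff_swap_smul_ssubset {R T : Finset α} {s t : α} (hs : s ∈ T \ R) (ht : t ∈ R \ T) :
    R \ Equiv.swap s t • T ⊂ R \ T := by
  rw [mem_sdiff] at hs ht
  have mem_smul_iff (p : α) : p ∈ Equiv.swap s t • T ↔ Equiv.swap s t p ∈ T := by
    rw [← inv_smul_mem_iff, Equiv.swap_inv, Equiv.Perm.smul_def]
  refine (ssubset_iff_of_subset fun p hp => ?_).2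
    ⟨t, mem_sdiff.2 ht, by simp [mem_smul_iff, hs.1]⟩
  rw [mem_sdiff, mem_smul_iff] at hp
  refine mem_sdiff.2 ⟨hp.1, fun hpT => hp.2 ?_⟩
  have hps : p ≠ s := fun h => hs.2 (h ▸ hp.1)
  have hpt : p ≠ t := fun h => ht.2 (h ▸ hpT)
  rwa [Equiv.swap_apply_of_ne_of_ne hps hpt]

theorem le_of_forall_le_swap_smul {β : Type*} [Preorder β] {f : Finset α → β} {R : Finset α}
    (hf : ∀ T, ∀ s ∈ T \ R, ∀ t ∈ R \ T, f T ≤ f (Equiv.swap s t • T)) {T : Finset α}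
    (hcard : #R = #T) : f T ≤ f R := by
  induction hn : #(R \ T) using Nat.strong_induction_on generalizing T with
  | _ n ih =>
    rcases (R \ T).eq_empty_or_nonempty with hRT | ⟨t, ht⟩
    · rw [eq_of_subset_of_card_le (sdiff_eq_empty_iff_subset.1 hRT) hcard.ge]
    · obtain ⟨s, hs⟩ : (T \ R).Nonempty := by
        rw [← card_pos, card_sdiff_comm hcard.symm]
        exact card_pos.2 ⟨t, ht⟩
      have hlt := card_lt_card (sdiff_swap_smul_ssubset hs ht)
      exact (hf T s hs t ht).trans (ih _ (hn ▸ hlt) (by rw [card_smul_finset, hcard]) rfl)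

end Exchange

section SMulProb

variable (K : Type*) [Field K] (G : Type*) [Group G] [Fintype G]
  {β : Type*} [MulAction G β] [DecidableEq β]

/-- The probability that a uniformly random element of the finite group `G` carries `x` to `y`. -/
def smulProb (x y : β) : K :=
  (#{g : G | g • x = y} : K) / Fintype.card G

variable {K G} in
theorem exists_smul_eq_of_smulProb_ne_zero {x y : β} (h : smulProb K G x y ≠ 0) :
    ∃ g : G, g • x = y := by
  by_contra! hne
  exact h (by simp [smulProb, hne])

theorem smulProb_smul_smul (a b : G) (x y : β) :
    smulProb K G (a • x) (b • y) = smulProb K G x y := by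
  have hcount : #{g : G | g • a • x = b • y} = #{g : G | g • x = y} :=
    card_equiv ((Equiv.mulLeft b⁻¹).trans (Equiv.mulRight a)) fun g => by
      simp [mul_smul, inv_smul_eq_iff]
  simp_rw [smulProb, hcount]

theorem smulProb_nonneg [LinearOrder K] [IsStrictOrderedRing K] (x y : β) :
    0 ≤ smulProb K G x y := by
  unfold smulProb
  positivity

theorem sum_smulProb [CharZero K] [Fintype β] (x : β) : ∑ y, smulProb K G x y = 1 := by
  have hcount : ∑ y, #{g : G | g • x = y} = Fintype.card G :=
    (card_eq_sum_card_fiberwise fun g _ => mem_univ (g • x)).symm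
  simp_rw [smulProb]
  rw [← sum_div, ← Nat.cast_sum, hcount, div_self (Nat.cast_ne_zero.2 Fintype.card_ne_zero)]

end SMulProb

section Permanent

variable {n R : Type*} [Fintype n] [DecidableEq n] [CommSemiring R]

theorem permanent_eq_sum_prod_row (A : Matrix n n R) :
    A.permanent = ∑ τ : Equiv.Perm n, ∏ i, A i (τ i) := by
  rw [← Matrix.permanent_transpose]
  rfl

theorem permanent_nonneg [PartialOrder R] [IsOrderedRing R] {A : Matrix n n R}
    (hA : ∀ i j, 0 ≤ A i j) : 0 ≤ A.permanent :=
  sum_nonneg fun _ _ => prod_nonneg fun _ _ => hA _ _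

end Permanent

/-- A selection of half-edges in an `S`-fold cover of the complete bipartite graph on rows `ι` and
columns `κ`: copy `p` of row `i` selects the column `row i p`, and copy `q` of column `j` selects
the row `col j q`. The two kinds of selections are independent of each other. -/
@[ext]
structure LiftConf (ι κ S : Type*) where
  row : ι → S → κ
  col : κ → S → ι

namespace LiftConf

variable {ι κ S : Type*}

instance [Fintype ι] [Fintype κ] [Fintype S] [DecidableEq ι] [DecidableEq κ] [DecidableEq S] :
    Fintype (LiftConf ι κ S) :=
  Fintype.ofEquiv ((ι → S → κ) × (κ → S → ι))
    ⟨fun x => ⟨x.1, x.2⟩, fun X => (X.row, X.col), fun _ => rfl, fun _ => rfl⟩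

/-- On every edge of `E`, the row and the column select each other on the same copies. -/
def AgreesOn (X : LiftConf ι κ S) (E : Finset (ι × κ)) : Prop :=
  ∀ e ∈ E, ∀ p, X.row e.1 p = e.2 ↔ X.col e.2 p = e.1

section Switching

/-- The vertices visited by the alternating walk that starts at the row `i₀`, leaves a row by its
selection on copy `s` and a column by its selection on copy `t`, and stops when it would leave
the edge set `E`. -/
inductive Reach (X : LiftConf ι κ S) (E : Finset (ι × κ)) (s t : S) (i₀ : ι) : ι ⊕ κ → Prop
  | start : Reach X E s t i₀ (.inl i₀)
  | row (i : ι) : Reach X E s t i₀ (.inl i) → (i, X.row i s) ∈ E →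
      Reach X E s t i₀ (.inr (X.row i s))
  | col (j : κ) : Reach X E s t i₀ (.inr j) → (X.col j t, j) ∈ E →
      Reach X E s t i₀ (.inl (X.col j t))

variable {X : LiftConf ι κ S} {E : Finset (ι × κ)} {s t : S} {i₀ : ι}

theorem AgreesOn.reach_row_iff_reach_col (hX : X.AgreesOn E) (hi₀ : (i₀, X.row i₀ t) ∉ E)
    {i : ι} {j : κ} (he : (i, j) ∈ E) (h : X.row i s = j ∨ X.row i t = j) :
    X.Reach E s t i₀ (.inl i) ↔ X.Reach E s t i₀ (.inr j) := by
  constructor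
  · intro hi
    rcases h with rfl | rfl
    · exact .row i hi he
    · cases hi with
      | start => exact absurd he hi₀
      | col j' hj' hE => rwa [(hX _ hE t).2 rfl]
  · intro hj
    rcases h with h | h
    · have hcol : X.col j s = i := (hX _ he s).1 h
      cases hj with
      | row i' hi' hE =>
        have hcol' : X.col (X.row i' s) s = i' := (hX _ hE s).1 rfl
        rwa [← hcol, hcol']
    · obtain rfl : X.col j t = i := (hX _ he t).1 h
      exact .col j hj he

theorem AgreesOn.not_reach_col (hX : X.AgreesOn E) {j : κ} (he : (i₀, j) ∉ E)
    (hs : X.col j s = i₀) : ¬ X.Reach E s t i₀ (.inr j) := by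
  intro h
  cases h with
  | row i _ hE =>
    obtain rfl := ((hX _ hE s).1 rfl).symm.trans hs
    exact he hE

variable [DecidableEq S]

open Classical in
/-- The permutation of the copies of the vertex `x` performed by `LiftConf.switch`. -/
noncomputable def sheetSwap (X : LiftConf ι κ S) (E : Finset (ι × κ)) (s t : S) (i₀ : ι)
    (x : ι ⊕ κ) : Equiv.Perm S :=
  if X.Reach E s t i₀ x then 1 else Equiv.swap s t

/-- The configuration obtained from `X` by exchanging the copies `s` and `t` of all vertices that
the alternating walk from `i₀` does not visit. -/
noncomputable def switch (E : Finset (ι × κ)) (s t : S) (i₀ : ι) (X : LiftConf ι κ S) :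
    LiftConf ι κ S where
  row i p := X.row i ((X.sheetSwap E s t i₀ (.inl i))⁻¹ p)
  col j q := X.col j ((X.sheetSwap E s t i₀ (.inr j))⁻¹ q)

theorem sheetSwap_of_reach {x : ι ⊕ κ} (h : X.Reach E s t i₀ x) :
    X.sheetSwap E s t i₀ x = 1 := if_pos h

theorem sheetSwap_of_not_reach {x : ι ⊕ κ} (h : ¬ X.Reach E s t i₀ x) :
    X.sheetSwap E s t i₀ x = Equiv.swap s t := if_neg h

theorem sheetSwap_congr {Y : LiftConf ι κ S} {x y : ι ⊕ κ}
    (h : Y.Reach E s t i₀ x ↔ X.Reach E s t i₀ y) :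
    Y.sheetSwap E s t i₀ x = X.sheetSwap E s t i₀ y := by
  unfold sheetSwap
  congr 1
  exact propext h

theorem sheetSwap_inv (x : ι ⊕ κ) :
    (X.sheetSwap E s t i₀ x)⁻¹ = X.sheetSwap E s t i₀ x := by
  unfold sheetSwap
  split_ifs <;> simp

theorem row_switch_of_reach {i : ι} (h : X.Reach E s t i₀ (.inl i)) :
    (X.switch E s t i₀).row i = X.row i := by
  ext p
  simp [switch, sheetSwap_inv, sheetSwap_of_reach h]

theorem col_switch_of_reach {j : κ} (h : X.Reach E s t i₀ (.inr j)) :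
    (X.switch E s t i₀).col j = X.col j := by
  ext p
  simp [switch, sheetSwap_inv, sheetSwap_of_reach h]

theorem reach_switch_iff (x : ι ⊕ κ) :
    (X.switch E s t i₀).Reach E s t i₀ x ↔ X.Reach E s t i₀ x := by
  constructor
  · intro h
    induction h with
    | start => exact .start
    | row i _ hE ih =>
      rw [row_switch_of_reach ih] at hE ⊢
      exact .row i ih hE
    | col j _ hE ih =>
      rw [col_switch_of_reach ih] at hE ⊢
      exact .col j ih hE
  · intro h
    induction h with
    | start => exact .start
    | row i hi hE ih =>
      rw [← row_switch_of_reach hi] at hE ⊢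
      exact .row i ih hE
    | col j hj hE ih =>
      rw [← col_switch_of_reach hj] at hE ⊢
      exact .col j ih hE

theorem sheetSwap_switch (x : ι ⊕ κ) :
    (X.switch E s t i₀).sheetSwap E s t i₀ x = X.sheetSwap E s t i₀ x :=
  sheetSwap_congr (reach_switch_iff x)

variable (E s t i₀) in
theorem switch_involutive : Function.Involutive (switch (ι := ι) (κ := κ) E s t i₀) := by
  intro X
  have inv_inv_apply (x : ι ⊕ κ) (p : S) :
      (X.sheetSwap E s t i₀ x)⁻¹ ((X.sheetSwap E s t i₀ x)⁻¹ p) = p := by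
    nth_rw 1 [sheetSwap_inv]
    exact Equiv.apply_symm_apply _ p
  ext v p
  · change X.row v ((X.sheetSwap E s t i₀ _)⁻¹
      (((X.switch E s t i₀).sheetSwap E s t i₀ _)⁻¹ p)) = X.row v p
    rw [sheetSwap_switch, inv_inv_apply]
  · change X.col v ((X.sheetSwap E s t i₀ _)⁻¹
      (((X.switch E s t i₀).sheetSwap E s t i₀ _)⁻¹ p)) = X.col v p
    rw [sheetSwap_switch, inv_inv_apply]

theorem AgreesOn.switch (hX : X.AgreesOn E) (hi₀ : (i₀, X.row i₀ t) ∉ E) :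
    (X.switch E s t i₀).AgreesOn E := by
  rintro ⟨i, j⟩ he p
  simp only [LiftConf.switch, sheetSwap_inv]
  by_cases hreach : X.Reach E s t i₀ (.inl i) ↔ X.Reach E s t i₀ (.inr j)
  · rw [sheetSwap_congr hreach]
    exact hX _ he _
  · have hnot := mt (hX.reach_row_iff_reach_col hi₀ he) hreach
    rw [not_or] at hnot
    have hfix (x : ι ⊕ κ) : X.row i (X.sheetSwap E s t i₀ x p) = j ↔ X.row i p = j := by
      unfold sheetSwap
      split_ifs
      · rfl
      · exact swap_apply_iff_of_not (P := (X.row i · = j)) hnot.1 hnot.2 p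
    rw [← hX _ he, hfix, hfix]

end Switching

section Matchings

/-- The configuration in which both ends of an edge of copy `p` are selected when it belongs to
the matching `τ p`. -/
def ofMatchings (τ : S → ι ≃ κ) : LiftConf ι κ S where
  row i p := τ p i
  col j p := (τ p).symm j

theorem ofMatchings_injective : Function.Injective (ofMatchings (ι := ι) (κ := κ) (S := S)) := by
  intro τ τ' h
  ext p i
  exact congrFun₂ (congrArg row h) i p

theorem agreesOn_ofMatchings (τ : S → ι ≃ κ) (E : Finset (ι × κ)) :
    (ofMatchings τ).AgreesOn E := by
  intro e _ p
  rw [eq_comm (b := e.1), ofMatchings, Equiv.eq_symm_apply]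

theorem AgreesOn.exists_ofMatchings_eq [Fintype ι] [Fintype κ] {X : LiftConf ι κ S}
    (hX : X.AgreesOn univ) : ∃ τ, ofMatchings τ = X :=
  ⟨fun p => ⟨(X.row · p), (X.col · p), fun i => (hX (i, _) (mem_univ _) p).1 rfl,
    fun j => (hX (_, j) (mem_univ _) p).2 rfl⟩, rfl⟩

/-- On every edge `(i, j)`, the permutation `σ i j` carries the copies of row `i` selecting `j`
onto the copies of column `j` selecting `i`. -/
def IsCompatible (X : LiftConf ι κ S) (σ : ι → κ → Equiv.Perm S) : Prop :=
  ∀ i j p, X.row i p = j ↔ X.col j (σ i j p) = i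

/-- The configuration read off from a matching `τ` of the vertices of the cover, forgetting the
copies that are matched. -/
def ofEquiv (τ : ι × S ≃ κ × S) : LiftConf ι κ S where
  row i p := (τ (i, p)).1
  col j q := (τ.symm (j, q)).1

/-- The matching `τ` uses only edges of the cover defined by `σ`, in which copy `p` of row `i` is
joined to copy `σ i j p` of column `j`. -/
def IsLiftMatching (σ : ι → κ → Equiv.Perm S) (τ : ι × S ≃ κ × S) : Prop :=
  ∀ x, σ x.1 (τ x).1 x.2 = (τ x).2

variable {σ : ι → κ → Equiv.Perm S}

theorem IsLiftMatching.apply_eq_iff {τ : ι × S ≃ κ × S} (hτ : IsLiftMatching σ τ) {i : ι} {j : κ}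
    {p : S} : (τ (i, p)).1 = j ↔ τ (i, p) = (j, σ i j p) := by
  refine ⟨?_, congrArg Prod.fst⟩
  rintro rfl
  exact Prod.ext rfl (hτ (i, p)).symm

theorem IsLiftMatching.isCompatible_ofEquiv {τ : ι × S ≃ κ × S} (hτ : IsLiftMatching σ τ) :
    (ofEquiv τ).IsCompatible σ := by
  intro i j p
  change (τ (i, p)).1 = j ↔ (τ.symm (j, σ i j p)).1 = i
  rw [hτ.apply_eq_iff, ← Equiv.eq_symm_apply]
  refine ⟨fun h => congrArg Prod.fst h.symm, fun h => Prod.ext h.symm ?_⟩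
  have hσ := hτ (τ.symm (j, σ i j p))
  rw [Equiv.apply_symm_apply, h] at hσ
  exact ((σ i j).injective hσ).symm

theorem ofEquiv_injOn : Set.InjOn ofEquiv {τ : ι × S ≃ κ × S | IsLiftMatching σ τ} := by
  intro τ hτ τ' hτ' h
  ext1 ⟨i, p⟩
  have hrow : (τ (i, p)).1 = (τ' (i, p)).1 := congrFun₂ (congrArg row h) i p
  exact (IsLiftMatching.apply_eq_iff hτ).1 hrow |>.trans
    ((IsLiftMatching.apply_eq_iff hτ').1 rfl).symm

theorem IsCompatible.exists_ofEquiv_eq {X : LiftConf ι κ S} (hX : X.IsCompatible σ) :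
    ∃ τ, IsLiftMatching σ τ ∧ ofEquiv τ = X := by
  have hcol (i : ι) (p : S) : X.col (X.row i p) (σ i (X.row i p) p) = i := (hX i _ p).1 rfl
  have hrow (j : κ) (q : S) : X.row (X.col j q) ((σ (X.col j q) j).symm q) = j :=
    (hX _ j _).2 (by simp)
  exact ⟨{
    toFun x := (X.row x.1 x.2, σ x.1 (X.row x.1 x.2) x.2)
    invFun y := (X.col y.1 y.2, (σ (X.col y.1 y.2) y.1).symm y.2)
    left_inv x := by simp [hcol]
    right_inv y := by simp [hrow] }, fun _ => rfl, rfl⟩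

end Matchings

section Fibers

variable [Fintype S]

/-- The copies of the row of `e` that select the column of `e`. -/
def rowFiber [DecidableEq κ] (X : LiftConf ι κ S) (e : ι × κ) : Finset S :=
  {p | X.row e.1 p = e.2}

/-- The copies of the column of `e` that select the row of `e`. -/
def colFiber [DecidableEq ι] (X : LiftConf ι κ S) (e : ι × κ) : Finset S :=
  {q | X.col e.2 q = e.1}

variable {X : LiftConf ι κ S} {e : ι × κ} {p : S}

@[simp]
theorem mem_rowFiber [DecidableEq κ] : p ∈ X.rowFiber e ↔ X.row e.1 p = e.2 := by
  simp [rowFiber]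

@[simp]
theorem mem_colFiber [DecidableEq ι] : p ∈ X.colFiber e ↔ X.col e.2 p = e.1 := by
  simp [colFiber]

theorem agreesOn_iff_rowFiber_eq_colFiber [DecidableEq ι] [DecidableEq κ]
    {E : Finset (ι × κ)} : X.AgreesOn E ↔ ∀ e ∈ E, X.rowFiber e = X.colFiber e := by
  simp [AgreesOn, Finset.ext_iff]

variable [DecidableEq S] {E : Finset (ι × κ)} {s t : S} {i₀ : ι}

theorem rowFiber_switch [DecidableEq κ] (e : ι × κ) :
    (X.switch E s t i₀).rowFiber e = X.sheetSwap E s t i₀ (.inl e.1) • X.rowFiber e := by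
  ext p
  simp [← inv_smul_mem_iff, switch]

theorem colFiber_switch [DecidableEq ι] (e : ι × κ) :
    (X.switch E s t i₀).colFiber e = X.sheetSwap E s t i₀ (.inr e.2) • X.colFiber e := by
  ext p
  simp [← inv_smul_mem_iff, switch]

theorem isCompatible_iff_smul_rowFiber [DecidableEq ι] [DecidableEq κ]
    {σ : ι → κ → Equiv.Perm S} :
    X.IsCompatible σ ↔ ∀ i j, σ i j • X.rowFiber (i, j) = X.colFiber (i, j) := by
  refine forall₂_congr fun i j => ?_
  rw [Finset.ext_iff]
  refine (forall_congr' fun p => ?_).trans (σ i j).forall_congr_right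
  rw [← Equiv.Perm.smul_def, smul_mem_smul_finset_iff, mem_rowFiber, mem_colFiber]

end Fibers

section Weight

variable [Fintype ι] [Fintype S]

/-- The product of the entries of `θ` selected by the copies of the rows. -/
def weight {R : Type*} [CommSemiring R] (θ : Matrix ι κ R) (X : LiftConf ι κ S) : R :=
  ∏ i, ∏ p, θ i (X.row i p)

theorem weight_switch [DecidableEq S] {R : Type*} [CommSemiring R] (θ : Matrix ι κ R)
    (E : Finset (ι × κ)) (s t : S) (i₀ : ι) (X : LiftConf ι κ S) :
    (X.switch E s t i₀).weight θ = X.weight θ :=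
  prod_congr rfl fun i _ => Equiv.prod_comp _ fun p => θ i (X.row i p)

variable [DecidableEq ι] [DecidableEq κ] [DecidableEq S] {K : Type*} [Field K]

/-- The weight of `X` times the probability that independent random permutations of the copies,
one for each edge `e ∈ D`, carry `X.rowFiber e` onto `X.colFiber e`. -/
def avgWeight (θ : Matrix ι κ K) (D : Finset (ι × κ)) (X : LiftConf ι κ S) : K :=
  X.weight θ * ∏ e ∈ D, smulProb K (Equiv.Perm S) (X.rowFiber e) (X.colFiber e)

theorem avgWeight_switch (θ : Matrix ι κ K) (D E : Finset (ι × κ)) (s t : S) (i₀ : ι)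
    (X : LiftConf ι κ S) : (X.switch E s t i₀).avgWeight θ D = X.avgWeight θ D := by
  simp only [avgWeight, weight_switch, rowFiber_switch, colFiber_switch, smulProb_smul_smul]

theorem avgWeight_nonneg [LinearOrder K] [IsStrictOrderedRing K] {θ : Matrix ι κ K}
    (hθ : ∀ i j, 0 ≤ θ i j) (D : Finset (ι × κ)) (X : LiftConf ι κ S) :
    0 ≤ X.avgWeight θ D :=
  mul_nonneg (prod_nonneg fun _ _ => prod_nonneg fun _ _ => hθ _ _)
    (prod_nonneg fun _ _ => smulProb_nonneg ..)

end Weight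

variable [Fintype ι] [Fintype κ] [Fintype S] [DecidableEq ι] [DecidableEq κ] [DecidableEq S]

instance (X : LiftConf ι κ S) (E : Finset (ι × κ)) : Decidable (X.AgreesOn E) :=
  inferInstanceAs (Decidable (∀ e ∈ E, ∀ p, X.row e.1 p = e.2 ↔ X.col e.2 p = e.1))

instance (X : LiftConf ι κ S) (σ : ι → κ → Equiv.Perm S) : Decidable (X.IsCompatible σ) :=
  inferInstanceAs (Decidable (∀ i j p, X.row i p = j ↔ X.col j (σ i j p) = i))

instance (σ : ι → κ → Equiv.Perm S) (τ : ι × S ≃ κ × S) : Decidable (IsLiftMatching σ τ) :=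
  inferInstanceAs (Decidable (∀ x, σ x.1 (τ x).1 x.2 = (τ x).2))

theorem card_isCompatible (X : LiftConf ι κ S) :
    #{σ : ι → κ → Equiv.Perm S | X.IsCompatible σ} =
      ∏ e, #{P : Equiv.Perm S | P • X.rowFiber e = X.colFiber e} := by
  have hpi : ({σ | X.IsCompatible σ} : Finset (ι → κ → Equiv.Perm S)) =
      Fintype.piFinset fun i => Fintype.piFinset fun j =>
        {P | P • X.rowFiber (i, j) = X.colFiber (i, j)} := by
    ext σ
    simp [isCompatible_iff_smul_rowFiber]
  rw [hpi, Fintype.prod_prod_type]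
  simp only [Fintype.card_piFinset]

section HybridSum

variable {K : Type*} [Field K]

variable (S) in
/-- The sum interpolating between the average of `perm (θ^↑P)` (at `E = ∅`) and `perm θ ^ M` (at
`E = univ`): both ends of the edges in `E` agree, and the other edges are averaged. -/
def hybridSum (θ : Matrix ι κ K) (E : Finset (ι × κ)) : K :=
  ∑ X : LiftConf ι κ S with X.AgreesOn E, X.avgWeight θ Eᶜ

/-- The sum of the averaged weights over the configurations that agree on `E` and in which the row
and the column of `e` select each other exactly on the copies in `R` and in `T`, respectively. -/
def fiberSum (θ : Matrix ι κ K) (D E : Finset (ι × κ)) (e : ι × κ) (R T : Finset S) : K :=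
  ∑ X : LiftConf ι κ S with X.AgreesOn E ∧ X.rowFiber e = R ∧ X.colFiber e = T, X.avgWeight θ D

variable {θ : Matrix ι κ K} {E : Finset (ι × κ)} {e : ι × κ}

theorem hybridSum_eq_sum_smulProb_mul_fiberSum (he : e ∉ E) :
    hybridSum S θ E = ∑ R : Finset S, ∑ T,
      smulProb K (Equiv.Perm S) R T * fiberSum θ (insert e E)ᶜ E e R T := by
  have hsplit (X : LiftConf ι κ S) : X.avgWeight θ Eᶜ =
      smulProb K (Equiv.Perm S) (X.rowFiber e) (X.colFiber e) * X.avgWeight θ (insert e E)ᶜ := by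
    rw [avgWeight, ← insert_erase (mem_compl.2 he), prod_insert (notMem_erase _ _),
      ← compl_insert, avgWeight]
    ring
  rw [hybridSum, ← sum_fiberwise _ fun X => (X.rowFiber e, X.colFiber e),
    Fintype.sum_prod_type]
  refine sum_congr rfl fun R _ => sum_congr rfl fun T _ => ?_
  rw [fiberSum, mul_sum, filter_filter]
  simp only [Prod.mk.injEq]
  refine sum_congr rfl fun X hX => ?_
  obtain ⟨-, rfl, rfl⟩ := (mem_filter.1 hX).2
  exact hsplit X

theorem hybridSum_insert :
    hybridSum S θ (insert e E) = ∑ R : Finset S, fiberSum θ (insert e E)ᶜ E e R R := by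
  rw [hybridSum, ← sum_fiberwise _ fun X => X.rowFiber e]
  refine sum_congr rfl fun R _ => ?_
  rw [fiberSum, filter_filter]
  congr 1
  ext X
  simp only [mem_filter, mem_univ, true_and, agreesOn_iff_rowFiber_eq_colFiber, forall_mem_insert]
  grind

theorem hybridSum_univ (θ : Matrix ι ι K) :
    hybridSum S θ univ = θ.permanent ^ Fintype.card S := by
  have hpow : θ.permanent ^ Fintype.card S =
      ∑ τ : S → Equiv.Perm ι, (ofMatchings τ).weight θ := by
    rw [permanent_eq_sum_prod_row, ← card_univ, ← prod_const, Fintype.prod_sum]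
    exact sum_congr rfl fun τ _ => prod_comm
  rw [hpow, hybridSum]
  refine (sum_nbij ofMatchings (fun τ _ => ?_) ofMatchings_injective.injOn (fun X hX => ?_)
    fun τ _ => ?_).symm
  · simpa using agreesOn_ofMatchings τ univ
  · obtain ⟨τ, rfl⟩ := AgreesOn.exists_ofMatchings_eq (mem_filter.1 hX).2
    exact ⟨τ, mem_coe.2 (mem_univ τ), rfl⟩
  · simp [avgWeight]

theorem avgWeight_univ (θ : Matrix ι κ K) (X : LiftConf ι κ S) :
    X.avgWeight θ univ = X.weight θ * (#{σ : ι → κ → Equiv.Perm S | X.IsCompatible σ} /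
      Fintype.card (ι → κ → Equiv.Perm S)) := by
  rw [avgWeight, card_isCompatible]
  congr 1
  simp [smulProb, prod_div_distrib, ← pow_mul, mul_comm (Fintype.card κ)]

variable [LinearOrder K] [IsStrictOrderedRing K]

theorem fiberSum_le_fiberSum_swap_smul (hθ : ∀ i j, 0 ≤ θ i j) (D : Finset (ι × κ)) (he : e ∉ E)
    {R T : Finset S} {s t : S} (hs : s ∈ T) (ht : t ∈ R) :
    fiberSum θ D E e R T ≤ fiberSum θ D E e R (Equiv.swap s t • T) := by
  classical
  unfold fiberSum
  rw [← sum_congr rfl fun X _ => avgWeight_switch θ D E s t e.1 X,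
    ← sum_image (switch_involutive E s t e.1).injective.injOn (f := avgWeight θ D)]
  refine sum_le_sum_of_subset_of_nonneg (image_subset_iff.2 fun X hX => ?_)
    fun X _ _ => avgWeight_nonneg hθ D X
  simp only [mem_filter, mem_univ, true_and] at hX ⊢
  obtain ⟨hagree, rfl, rfl⟩ := hX
  rw [mem_rowFiber] at ht
  rw [mem_colFiber] at hs
  refine ⟨hagree.switch (ht ▸ he), ?_, ?_⟩
  · rw [rowFiber_switch, sheetSwap_of_reach .start, one_smul]
  · rw [colFiber_switch, sheetSwap_of_not_reach (hagree.not_reach_col he hs)]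

theorem fiberSum_le_fiberSum_self (hθ : ∀ i j, 0 ≤ θ i j) (D : Finset (ι × κ)) (he : e ∉ E)
    {R T : Finset S} (hcard : #R = #T) :
    fiberSum θ D E e R T ≤ fiberSum θ D E e R R :=
  le_of_forall_le_swap_smul (f := fiberSum θ D E e R) (fun _ _ hs _ ht =>
    fiberSum_le_fiberSum_swap_smul hθ D he (mem_sdiff.1 hs).1 (mem_sdiff.1 ht).1) hcard

theorem hybridSum_le_hybridSum_insert (hθ : ∀ i j, 0 ≤ θ i j) (he : e ∉ E) :
    hybridSum S θ E ≤ hybridSum S θ (insert e E) := by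
  rw [hybridSum_eq_sum_smulProb_mul_fiberSum he, hybridSum_insert]
  refine sum_le_sum fun R _ => ?_
  set F := fiberSum θ (insert e E)ᶜ E e R
  have hterm (T : Finset S) :
      smulProb K (Equiv.Perm S) R T * F T ≤ smulProb K (Equiv.Perm S) R T * F R := by
    by_cases hRT : smulProb K (Equiv.Perm S) R T = 0
    · simp [hRT]
    · obtain ⟨P, rfl⟩ := exists_smul_eq_of_smulProb_ne_zero hRT
      exact mul_le_mul_of_nonneg_left
        (fiberSum_le_fiberSum_self hθ _ he (card_smul_finset P R).symm) (smulProb_nonneg ..)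
  calc ∑ T, smulProb K (Equiv.Perm S) R T * F T
      ≤ ∑ T, smulProb K (Equiv.Perm S) R T * F R := sum_le_sum fun T _ => hterm T
    _ = F R := by rw [← sum_mul, sum_smulProb, one_mul]

theorem hybridSum_empty_le (hθ : ∀ i j, 0 ≤ θ i j) (E : Finset (ι × κ)) :
    hybridSum S θ ∅ ≤ hybridSum S θ E := by
  induction E using Finset.induction_on with
  | empty => exact le_rfl
  | insert e E he ih => exact ih.trans (hybridSum_le_hybridSum_insert hθ he)

end HybridSum

end LiftConf

section Bethe

open LiftConf

variable {m M : ℕ}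

theorem permanent_plift_eq_sum_isLiftMatching {R : Type*} [CommSemiring R]
    (θ : Matrix (Fin m) (Fin m) R) (σ : Fin m → Fin m → Equiv.Perm (Fin M)) :
    (θ.plift σ).permanent = ∑ τ with IsLiftMatching σ τ, (ofEquiv τ).weight θ := by
  rw [permanent_eq_sum_prod_row, sum_filter]
  refine sum_congr rfl fun τ _ => ?_
  simp only [Matrix.plift, Matrix.of_apply, prod_mul_distrib, prod_boole, mem_univ, true_imp_iff]
  rw [Fintype.prod_prod_type, mul_ite, mul_one, mul_zero]
  rfl

theorem permanent_plift_eq_sum_isCompatible {R : Type*} [CommSemiring R]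
    (θ : Matrix (Fin m) (Fin m) R) (σ : Fin m → Fin m → Equiv.Perm (Fin M)) :
    (θ.plift σ).permanent =
      ∑ X : LiftConf (Fin m) (Fin m) (Fin M) with X.IsCompatible σ, X.weight θ := by
  rw [permanent_plift_eq_sum_isLiftMatching]
  refine sum_nbij ofEquiv (fun τ hτ => ?_) ?_ (fun X hX => ?_) fun _ _ => rfl
  · simpa using IsLiftMatching.isCompatible_ofEquiv (mem_filter.1 hτ).2
  · simpa using ofEquiv_injOn
  · obtain ⟨τ, hτ, rfl⟩ := IsCompatible.exists_ofEquiv_eq (mem_filter.1 hX).2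
    exact ⟨τ, by simpa using hτ, rfl⟩

theorem betheAvg_eq_hybridSum_empty (θ : Matrix (Fin m) (Fin m) ℝ) :
    betheAvg M θ = hybridSum (Fin M) θ ∅ := by
  have hagree : ({X | X.AgreesOn ∅} : Finset (LiftConf (Fin m) (Fin m) (Fin M))) = univ := by
    simp [AgreesOn]
  have hcount : ∑ σ : Fin m → Fin m → Equiv.Perm (Fin M), (θ.plift σ).permanent =
      ∑ X : LiftConf (Fin m) (Fin m) (Fin M),
      X.weight θ * #{σ : Fin m → Fin m → Equiv.Perm (Fin M) | X.IsCompatible σ} := by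
    simp_rw [permanent_plift_eq_sum_isCompatible, sum_filter]
    rw [sum_comm]
    simp [← sum_filter, mul_comm]
  rw [betheAvg, hcount, sum_div, hybridSum, hagree, compl_empty]
  exact sum_congr rfl fun X _ => by rw [avgWeight_univ, mul_div_assoc]

theorem betheAvg_le_permanent_pow {θ : Matrix (Fin m) (Fin m) ℝ} (hθ : ∀ i j, 0 ≤ θ i j) (M : ℕ) :
    betheAvg M θ ≤ θ.permanent ^ M := by
  calc betheAvg M θ = hybridSum (Fin M) θ ∅ := betheAvg_eq_hybridSum_empty θ
    _ ≤ hybridSum (Fin M) θ univ := hybridSum_empty_le hθ univ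
    _ = θ.permanent ^ M := by rw [hybridSum_univ, Fintype.card_fin]

theorem betheAvg_nonneg {θ : Matrix (Fin m) (Fin m) ℝ} (hθ : ∀ i j, 0 ≤ θ i j) (M : ℕ) :
    0 ≤ betheAvg M θ := by
  refine div_nonneg (sum_nonneg fun σ _ => permanent_nonneg fun x y => ?_) (Nat.cast_nonneg _)
  rw [Matrix.plift, Matrix.of_apply]
  split_ifs <;> simp [hθ]

theorem betheDegM_nonneg {θ : Matrix (Fin m) (Fin m) ℝ} (hθ : ∀ i j, 0 ≤ θ i j) (M : ℕ) :
    0 ≤ betheDegM M θ :=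
  Real.rpow_nonneg (betheAvg_nonneg hθ M) _

theorem betheDegM_le_permanent {θ : Matrix (Fin m) (Fin m) ℝ} (hθ : ∀ i j, 0 ≤ θ i j)
    (hM : M ≠ 0) : betheDegM M θ ≤ θ.permanent := by
  calc betheDegM M θ ≤ (θ.permanent ^ M) ^ ((M : ℝ)⁻¹) := by
        unfold betheDegM
        gcongr
        exacts [betheAvg_nonneg hθ M, betheAvg_le_permanent_pow hθ M]
    _ = θ.permanent := Real.pow_rpow_inv_natCast (permanent_nonneg hθ) hM

end Bethe

/-- The Bethe permanent of a nonnegative matrix is at most its permanent. -/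
theorem bethe_le_permanent {m : ℕ} (θ : Matrix (Fin m) (Fin m) ℝ)
    (hθ : ∀ i j, 0 ≤ θ i j) :
    bethe θ ≤ θ.permanent := by
  refine Filter.limsup_le_of_le ?_ ?_
  · exact Filter.IsCoboundedUnder.of_frequently_ge
      (Filter.Frequently.of_forall fun M => betheDegM_nonneg hθ M)
  · filter_upwards [Filter.eventually_ne_atTop 0] with M hM
    exact betheDegM_le_permanent hθ hM
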